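/- arXiv:2511.14485 — 2 statements merged into one kernel-verified Lean document; each statement's English description precedes it below -/
import Mathlib

section
/- Let X be a nonempty set and let k : X × X → ℝ be a symmetric positive definite kernel. Then there exists a real Hilbert space H and a map Φ : X → H such that k(x, x') = ⟨Φ(x), Φ(x')⟩_H for all x, x' ∈ X. -/
/-- The quadratic form of a positive definite kernel is nonnegative on finitely supported
functions. -/
lemma kernel_quadraticForm_nonneg {X : Type*} {k : X → X → ℝ}
    (hpd : ∀ (N : ℕ) (x : Fin N → X) (c : Fin N → ℝ),
      0 ≤ ∑ i, ∑ j, c i * c j * k (x i) (x j)) (f : X →₀ ℝ) :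
    0 ≤ ∑ x ∈ f.support, ∑ y ∈ f.support, f x * f y * k x y := by
  have reindex (g : X → ℝ) :
      ∑ x ∈ f.support, g x = ∑ i, g (f.support.equivFin.symm i) := by
    rw [f.support.equivFin.symm.sum_comp (fun x : f.support ↦ g x), Finset.sum_coe_sort]
  simpa only [reindex] using
    hpd f.support.card (fun i ↦ f.support.equivFin.symm i) (fun i ↦ f (f.support.equivFin.symm i))

/-- A scalar positive definite kernel, viewed as an operator-valued kernel on `ℝ`, is positive
semidefinite. -/
lemma posSemidef_smul_one_of_kernel {X : Type*} {k : X → X → ℝ}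
    (hsymm : ∀ x x', k x x' = k x' x)
    (hpd : ∀ (N : ℕ) (x : Fin N → X) (c : Fin N → ℝ),
      0 ≤ ∑ i, ∑ j, c i * c j * k (x i) (x j)) :
    (Matrix.of fun x y ↦ k x y • (1 : ℝ →L[ℝ] ℝ) :
      Matrix X X (ℝ →L[ℝ] ℝ)).PosSemidef := by
  set K : Matrix X X (ℝ →L[ℝ] ℝ) := Matrix.of fun x y ↦ k x y • (1 : ℝ →L[ℝ] ℝ) with hK
  have posSemidef_iff := (RKHS.posSemidef_tfae (K := K)).out 0 2
  refine posSemidef_iff.mpr ⟨?_, fun f ↦ ?_⟩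
  · ext x y
    simp [hK, Matrix.conjTranspose_apply, hsymm x y]
  · refine (kernel_quadraticForm_nonneg hpd f).trans_eq ?_
    simp only [Finsupp.sum, RCLike.re_to_real]
    refine Finset.sum_congr rfl fun x _ ↦ Finset.sum_congr rfl fun y _ ↦ ?_
    simp [hK, hsymm x y]
    ring

/-- Feature-space representation of a positive definite kernel: every symmetric
positive definite kernel `k` on a nonempty set `X` arises as the inner product
of a feature map `Φ : X → H` into some real Hilbert space `H`. -/
theorem kernel_feature_map {X : Type u} [Nonempty X] (k : X → X → ℝ)
    (hsymm : ∀ x x', k x x' = k x' x)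
    (hpd : ∀ (N : ℕ) (x : Fin N → X) (c : Fin N → ℝ),
      0 ≤ ∑ i, ∑ j, c i * c j * k (x i) (x j)) :
    ∃ (H : Type u) (_ : NormedAddCommGroup H) (ip : InnerProductSpace ℝ H)
      (_ : CompleteSpace H) (Φ : X → H),
      ∀ x x', k x x' = @inner ℝ H ip.toInner (Φ x) (Φ x') := by
  let K : Matrix X X (ℝ →L[ℝ] ℝ) := Matrix.of fun x y ↦ k x y • (1 : ℝ →L[ℝ] ℝ)
  have : Fact K.PosSemidef := ⟨posSemidef_smul_one_of_kernel hsymm hpd⟩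
  refine ⟨RKHS.OfKernel K, inferInstance, inferInstance, inferInstance,
    fun x ↦ RKHS.kerFun (RKHS.OfKernel K) x (1 : ℝ), fun x x' ↦ ?_⟩
  rw [← RKHS.kernel_inner, RKHS.OfKernel.kernel_ofKernel]
  simp [K, hsymm x x']
end

section
/- Let (X, 𝒜, μ) be a σ-finite measure space and let k : X × X → ℝ be measurable and square-integrable with respect to the product measure μ ⊗ μ. Define the integral operator T_k on L²(X, μ) by (T_k f)(x) = ∫_X k(x, x') f(x') dμ(x'). Then for any Hilbert basis (orthonormal basis) (e_i)_{i∈I} of L²(X, μ), one has Σ_{i∈I} ‖T_k e_i‖²_{L²} = ∫_{X×X} |k(x, x')|² d(μ ⊗ μ)(x, x'); in particular T_k is a Hilbert–Schmidt operator. -/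
open MeasureTheory

section LpTensor

variable {X Y : Type*} [MeasurableSpace X] [MeasurableSpace Y] {μ : Measure X} {ν : Measure Y}

theorem MeasureTheory.MemLp.two_mul_prod [SFinite ν] {f : X → ℝ} {g : Y → ℝ}
    (hf : MemLp f 2 μ) (hg : MemLp g 2 ν) :
    MemLp (fun z : X × Y => f z.1 * g z.2) 2 (μ.prod ν) := by
  refine (memLp_two_iff_integrable_sq (hf.1.comp_fst.mul hg.1.comp_snd)).2 ?_
  simpa only [Pi.mul_apply, mul_pow] using hf.integrable_sq.mul_prod hg.integrable_sq

/-- The tensor product `(x, y) ↦ f x * g y` of two square-integrable functions. -/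
noncomputable def lpTensor [SFinite ν] (f : Lp ℝ 2 μ) (g : Lp ℝ 2 ν) : Lp ℝ 2 (μ.prod ν) :=
  ((Lp.memLp f).two_mul_prod (Lp.memLp g)).toLp _

theorem coeFn_lpTensor [SFinite ν] (f : Lp ℝ 2 μ) (g : Lp ℝ 2 ν) :
    lpTensor f g =ᵐ[μ.prod ν] fun z => f z.1 * g z.2 :=
  MemLp.coeFn_toLp _

theorem inner_lpTensor_left [SFinite ν] (f : Lp ℝ 2 μ) (g : Lp ℝ 2 ν) (K : Lp ℝ 2 (μ.prod ν)) :
    inner ℝ (lpTensor f g) K = ∫ z, f z.1 * g z.2 * K z ∂(μ.prod ν) := by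
  rw [L2.inner_def]
  refine integral_congr_ae ?_
  filter_upwards [coeFn_lpTensor f g] with z hz
  rw [hz]
  simp [mul_comm]

theorem inner_lpTensor_lpTensor [SFinite μ] [SFinite ν] (f f' : Lp ℝ 2 μ) (g g' : Lp ℝ 2 ν) :
    inner ℝ (lpTensor f g) (lpTensor f' g') = inner ℝ f f' * inner ℝ g g' := by
  rw [inner_lpTensor_left, L2.inner_def, L2.inner_def, ← integral_prod_mul]
  refine integral_congr_ae ?_
  filter_upwards [coeFn_lpTensor f' g'] with z hz
  rw [hz]
  simp only [RCLike.inner_apply, conj_trivial]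
  ring

theorem norm_lpTensor [SFinite μ] [SFinite ν] (f : Lp ℝ 2 μ) (g : Lp ℝ 2 ν) :
    ‖lpTensor f g‖ = ‖f‖ * ‖g‖ := by
  rw [← sq_eq_sq₀ (norm_nonneg _) (by positivity), mul_pow]
  simp only [← real_inner_self_eq_norm_sq, inner_lpTensor_lpTensor]

/-- `lpTensor` as a continuous bilinear map. -/
noncomputable def lpTensorL (μ : Measure X) (ν : Measure Y) [SFinite μ] [SFinite ν] :
    Lp ℝ 2 μ →L[ℝ] Lp ℝ 2 ν →L[ℝ] Lp ℝ 2 (μ.prod ν) :=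
  LinearMap.mkContinuous₂
    (LinearMap.mk₂ ℝ lpTensor
      (fun f f' g => by
        apply Lp.ext
        filter_upwards [coeFn_lpTensor (f + f') g, coeFn_lpTensor f g, coeFn_lpTensor f' g,
          Lp.coeFn_add (lpTensor f g) (lpTensor f' g),
          Measure.quasiMeasurePreserving_fst.ae (Lp.coeFn_add f f')] with z h₁ h₂ h₃ h₄ h₅
        rw [h₁, h₄, h₅, Pi.add_apply, Pi.add_apply, h₂, h₃, add_mul])
      (fun c f g => by
        apply Lp.ext
        filter_upwards [coeFn_lpTensor (c • f) g, coeFn_lpTensor f g,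
          Lp.coeFn_smul c (lpTensor f g),
          Measure.quasiMeasurePreserving_fst.ae (Lp.coeFn_smul c f)] with z h₁ h₂ h₃ h₄
        rw [h₁, h₃, h₄, Pi.smul_apply, Pi.smul_apply, h₂, smul_mul_assoc])
      (fun f g g' => by
        apply Lp.ext
        filter_upwards [coeFn_lpTensor f (g + g'), coeFn_lpTensor f g, coeFn_lpTensor f g',
          Lp.coeFn_add (lpTensor f g) (lpTensor f g'),
          Measure.quasiMeasurePreserving_snd.ae (Lp.coeFn_add g g')] with z h₁ h₂ h₃ h₄ h₅
        rw [h₁, h₄, h₅, Pi.add_apply, Pi.add_apply, h₂, h₃, mul_add])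
      (fun c f g => by
        apply Lp.ext
        filter_upwards [coeFn_lpTensor f (c • g), coeFn_lpTensor f g,
          Lp.coeFn_smul c (lpTensor f g),
          Measure.quasiMeasurePreserving_snd.ae (Lp.coeFn_smul c g)] with z h₁ h₂ h₃ h₄
        rw [h₁, h₃, h₄, Pi.smul_apply, Pi.smul_apply, h₂, mul_smul_comm]))
    1 (fun f g => by simp [norm_lpTensor])

theorem lpTensorL_apply [SFinite μ] [SFinite ν] (f : Lp ℝ 2 μ) (g : Lp ℝ 2 ν) :
    lpTensorL μ ν f g = lpTensor f g :=
  rfl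

theorem setIntegral_prod_eq_inner_lpTensor [SFinite μ] [SFinite ν] {s : Set X} {t : Set Y}
    (hs : MeasurableSet s) (ht : MeasurableSet t) (hμs : μ s ≠ ⊤) (hνt : ν t ≠ ⊤)
    (K : Lp ℝ 2 (μ.prod ν)) :
    ∫ z in s ×ˢ t, K z ∂(μ.prod ν) =
      inner ℝ (lpTensor (indicatorConstLp 2 hs hμs 1) (indicatorConstLp 2 ht hνt 1)) K := by
  rw [inner_lpTensor_left, ← integral_indicator (hs.prod ht)]
  refine integral_congr_ae ?_
  filter_upwards [Measure.quasiMeasurePreserving_fst.ae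
      (indicatorConstLp_coeFn (p := 2) (hs := hs) (hμs := hμs) (c := (1 : ℝ))),
    Measure.quasiMeasurePreserving_snd.ae
      (indicatorConstLp_coeFn (p := 2) (hs := ht) (hμs := hνt) (c := (1 : ℝ)))] with z h₁ h₂
  rw [h₁, h₂]
  by_cases hz₁ : z.1 ∈ s <;> by_cases hz₂ : z.2 ∈ t <;> simp [hz₁, hz₂]

/-- An integrable function on a product whose integral over every measurable rectangle vanishes
is almost everywhere zero. -/
theorem MeasureTheory.Integrable.ae_eq_zero_of_forall_setIntegral_prod_eq_zero
    {ρ : Measure (X × Y)} {f : X × Y → ℝ} (hf : Integrable f ρ)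
    (h : ∀ s t, MeasurableSet s → MeasurableSet t → ∫ z in s ×ˢ t, f z ∂ρ = 0) :
    f =ᵐ[ρ] 0 := by
  have huniv : ∫ z, f z ∂ρ = 0 := by simpa using h Set.univ Set.univ .univ .univ
  refine hf.ae_eq_zero_of_forall_setIntegral_eq_zero fun u hu hfin => ?_
  clear hfin
  induction u, hu using MeasurableSpace.induction_on_inter generateFrom_prod.symm
    isPiSystem_prod with
  | empty => simp
  | basic u hu =>
    obtain ⟨s, hs, t, ht, rfl⟩ := hu
    exact h s t hs ht
  | compl u hu ih =>
    rw [setIntegral_compl hu hf, huniv, ih, sub_zero]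
  | iUnion u hd hu ih =>
    simp [integral_iUnion hu hd hf.integrableOn, ih]

theorem eq_zero_of_forall_inner_lpTensor_eq_zero [SigmaFinite μ] [SigmaFinite ν]
    {K : Lp ℝ 2 (μ.prod ν)} (h : ∀ f g, inner ℝ (lpTensor f g) K = 0) : K = 0 := by
  have hfin : ∀ n, (μ.prod ν) (spanningSets μ n ×ˢ spanningSets ν n) < ⊤ := fun n => by
    rw [Measure.prod_prod]
    exact ENNReal.mul_lt_top (measure_spanningSets_lt_top μ n) (measure_spanningSets_lt_top ν n)
  have hunion : ⋃ n, spanningSets μ n ×ˢ spanningSets ν n = Set.univ := by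
    rw [Set.iUnion_prod_of_monotone (monotone_spanningSets μ) (monotone_spanningSets ν),
      iUnion_spanningSets, iUnion_spanningSets, Set.univ_prod_univ]
  rw [Lp.eq_zero_iff_ae_eq_zero]
  suffices ∀ᵐ z ∂(μ.prod ν).restrict (⋃ n, spanningSets μ n ×ˢ spanningSets ν n),
      K z = (0 : X × Y → ℝ) z by rwa [hunion, Measure.restrict_univ] at this
  rw [ae_restrict_iUnion_iff]
  intro n
  have : Fact ((μ.prod ν) (spanningSets μ n ×ˢ spanningSets ν n) < ⊤) := ⟨hfin n⟩
  have hint : IntegrableOn K (spanningSets μ n ×ˢ spanningSets ν n) (μ.prod ν) :=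
    ((Lp.memLp K).restrict _).integrable one_le_two
  refine hint.ae_eq_zero_of_forall_setIntegral_prod_eq_zero fun s t hs ht => ?_
  rw [Measure.restrict_restrict (hs.prod ht), Set.prod_inter_prod,
    setIntegral_prod_eq_inner_lpTensor (hs.inter (measurableSet_spanningSets μ n))
      (ht.inter (measurableSet_spanningSets ν n))
      (measure_ne_top_of_subset Set.inter_subset_right (measure_spanningSets_lt_top μ n).ne)
      (measure_ne_top_of_subset Set.inter_subset_right (measure_spanningSets_lt_top ν n).ne), h]

/-- The tensor products of the elements of two Hilbert bases form a Hilbert basis of the `L²` space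
of the product measure. -/
theorem exists_hilbertBasis_lpTensor [SigmaFinite μ] [SigmaFinite ν] {ι κ : Type*}
    (e : HilbertBasis ι ℝ (Lp ℝ 2 μ)) (d : HilbertBasis κ ℝ (Lp ℝ 2 ν)) :
    ∃ b : HilbertBasis (ι × κ) ℝ (Lp ℝ 2 (μ.prod ν)),
      ∀ p, b p = lpTensor (e p.1) (d p.2) := by
  classical
  have hortho : Orthonormal ℝ fun p : ι × κ => lpTensor (e p.1) (d p.2) := by
    rw [orthonormal_iff_ite]
    intro p q
    rw [inner_lpTensor_lpTensor, orthonormal_iff_ite.1 e.orthonormal,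
      orthonormal_iff_ite.1 d.orthonormal]
    by_cases h₁ : p.1 = q.1 <;> by_cases h₂ : p.2 = q.2 <;> simp [Prod.ext_iff, h₁, h₂]
  refine ⟨HilbertBasis.mkOfOrthogonalEqBot hortho ?_, fun p => by
    rw [HilbertBasis.coe_mkOfOrthogonalEqBot]⟩
  rw [Submodule.eq_bot_iff]
  intro K hK
  have hbasis : ∀ i j, inner ℝ (lpTensor (e i) (d j)) K = 0 := fun i j =>
    hK _ (Submodule.subset_span ⟨(i, j), rfl⟩)
  have hright : ∀ i g, inner ℝ (lpTensor (e i) g) K = 0 := fun i => by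
    have : (innerSL ℝ K).comp (lpTensorL μ ν (e i)) = 0 :=
      ContinuousLinearMap.ext_on (Submodule.dense_iff_topologicalClosure_eq_top.2 d.dense_span)
        (by rintro _ ⟨j, rfl⟩; simpa [lpTensorL_apply, real_inner_comm] using hbasis i j)
    intro g
    rw [real_inner_comm]
    exact DFunLike.congr_fun this g
  refine eq_zero_of_forall_inner_lpTensor_eq_zero fun f g => ?_
  have : (innerSL ℝ K).comp ((lpTensorL μ ν).flip g) = 0 :=
    ContinuousLinearMap.ext_on (Submodule.dense_iff_topologicalClosure_eq_top.2 e.dense_span)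
      (by rintro _ ⟨i, rfl⟩; simpa [lpTensorL_apply, real_inner_comm] using hright i g)
  rw [real_inner_comm]
  exact DFunLike.congr_fun this f

end LpTensor

theorem HilbertBasis.hasSum_inner_sq {ι E : Type*} [NormedAddCommGroup E] [InnerProductSpace ℝ E]
    (b : HilbertBasis ι ℝ E) (x : E) : HasSum (fun i => inner ℝ (b i) x ^ 2) (‖x‖ ^ 2) := by
  simpa [sq, real_inner_comm, real_inner_self_eq_norm_mul_norm] using b.hasSum_inner_mul_inner x x

/-- An integral operator `T_k` with square-integrable kernel `k` on a σ-finite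
measure space is Hilbert–Schmidt: for any Hilbert (orthonormal) basis `(e_i)`
of `L²(X, μ)`, the family `‖T_k e_i‖²` is summable and its sum equals
`∫ |k|² d(μ ⊗ μ)`. -/
theorem integral_operator_hilbert_schmidt {X : Type*} [MeasurableSpace X]
    (μ : Measure X) [SigmaFinite μ] (k : X × X → ℝ) (hk_meas : Measurable k)
    (hk_sq : Integrable (fun z => |k z| ^ 2) (μ.prod μ))
    (T : Lp ℝ 2 μ → Lp ℝ 2 μ)
    (hT : ∀ f : Lp ℝ 2 μ, (T f : X → ℝ) =ᵐ[μ] fun x => ∫ x', k (x, x') * f x' ∂μ)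
    {ι : Type*} (e : HilbertBasis ι ℝ (Lp ℝ 2 μ)) :
    Summable (fun i => ‖T (e i)‖ ^ 2) ∧
      ∑' i, ‖T (e i)‖ ^ 2 = ∫ z, |k z| ^ 2 ∂(μ.prod μ) := by
  have hk : MemLp k 2 (μ.prod μ) :=
    (memLp_two_iff_integrable_sq hk_meas.aestronglyMeasurable).2 (by simpa using hk_sq)
  have hk_coe := hk.coeFn_toLp
  set K : Lp ℝ 2 (μ.prod μ) := hk.toLp k
  have hnorm : ‖K‖ ^ 2 = ∫ z, |k z| ^ 2 ∂(μ.prod μ) := by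
    rw [← real_inner_self_eq_norm_sq, L2.inner_def]
    refine integral_congr_ae ?_
    filter_upwards [hk_coe] with z hz
    rw [hz, sq_abs, RCLike.inner_apply, conj_trivial, sq]
  have hinner : ∀ f g : Lp ℝ 2 μ, inner ℝ (lpTensor f g) K = inner ℝ f (T g) := fun f g => by
    have hcongr : (fun z => f z.1 * g z.2 * K z) =ᵐ[μ.prod μ] fun z => f z.1 * g z.2 * k z := by
      filter_upwards [hk_coe] with z hz
      rw [hz]
    have hint : Integrable (fun z => f z.1 * g z.2 * k z) (μ.prod μ) :=
      ((Lp.memLp f).two_mul_prod (Lp.memLp g)).integrable_mul hk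
    rw [inner_lpTensor_left, integral_congr_ae hcongr, integral_prod _ hint, L2.inner_def]
    refine integral_congr_ae ?_
    filter_upwards [hT g] with x hx
    rw [hx, RCLike.inner_apply, conj_trivial, ← integral_mul_const]
    congr with y
    ring
  obtain ⟨b, hb⟩ := exists_hilbertBasis_lpTensor e e
  have hsum : HasSum (fun p : ι × ι => inner ℝ (e p.2) (T (e p.1)) ^ 2) (‖K‖ ^ 2) := by
    refine (Equiv.prodComm ι ι).hasSum_iff.1 ?_
    simpa [Function.comp_def, hb, hinner] using b.hasSum_inner_sq K
  have := hsum.prod_fiberwise fun j => e.hasSum_inner_sq (T (e j))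
  exact ⟨this.summable, this.tsum_eq.trans hnorm⟩
end
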